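/- For every positive integer a and every integer k with 0 ≤ k ≤ a−2, R⁺(a+k+1, a−k−1) < R⁺(a+k, a−k); that is, for fixed a the quantity R⁺(a+k, a−k) is strictly decreasing in k for k = 0, 1, …, a−1. -/

import Mathlib

/-- The Beta function `B(a,b) = ∫₀¹ t^(a-1) (1-t)^(b-1) dt`. -/
noncomputable def betaFn (a b : ℝ) : ℝ := ∫ t in (0:ℝ)..1, t ^ (a - 1) * (1 - t) ^ (b - 1)

/-- `I(a,b)`: the probability that a `Beta(a,b)` random variable is `≥ 1/2`. -/
noncomputable def I (a b : ℝ) : ℝ :=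
  (1 / betaFn a b) * ∫ t in (1/2 : ℝ)..1, t ^ (a - 1) * (1 - t) ^ (b - 1)

/-- `h(x) = max (x, 1-x)`. -/
noncomputable def hFn (x : ℝ) : ℝ := max x (1 - x)

/-- Expected stage-wise reward. -/
noncomputable def R (a b : ℝ) : ℝ :=
  a / (a + b) * (hFn (I (a + 1) b) - hFn (I a b)) +
    b / (a + b) * (hFn (I a (b + 1)) - hFn (I a b))

/-- Optimistic knowledge-gradient reward. -/
noncomputable def Rplus (a b : ℝ) : ℝ :=
  max (hFn (I (a + 1) b) - hFn (I a b)) (hFn (I a (b + 1)) - hFn (I a b))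

/-- Pessimistic knowledge-gradient reward. -/
noncomputable def Rminus (a b : ℝ) : ℝ :=
  min (hFn (I (a + 1) b) - hFn (I a b)) (hFn (I a (b + 1)) - hFn (I a b))

/-!
Increasing `a` at constant `a + b` raises the Beta integrand on `[1/2, 1]` and, by the reflection
`t ↦ 1 - t`, lowers it on `[0, 1/2]`; hence `I` increases along antidiagonals. For `b ≤ a` this
shows that the optimistic reward is `I (a + 1) b - I a b`, which integration by parts evaluates to
`(1/2) ^ (a + b) / ((a + b) * B (a + 1, b))`. Along an antidiagonal only the Beta function varies,
and it increases strictly away from the diagonal: folding `[0, 1]` onto `[1/2, 1]` reduces this to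
`0 < (t ^ p - (1 - t) ^ p) * (t ^ q - (1 - t) ^ q)` for `p, q > 0` and `1/2 < t < 1`.
-/

open MeasureTheory Set

/-- The unnormalised density of the `Beta(a, b)` distribution on `(0, 1)`. -/
noncomputable def betaKernel (a b t : ℝ) : ℝ := t ^ (a - 1) * (1 - t) ^ (b - 1)

/-- The upper incomplete Beta function, with the lower endpoint `x` as first argument. -/
noncomputable def upperBeta (x a b : ℝ) : ℝ := ∫ t in x..1, betaKernel a b t

section Kernel

variable {t : ℝ}

lemma betaKernel_one_sub (a b t : ℝ) : betaKernel a b (1 - t) = betaKernel b a t := by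
  simp only [betaKernel, sub_sub_cancel, mul_comm]

lemma betaKernel_pos (a b : ℝ) (ht : t ∈ Ioo 0 1) : 0 < betaKernel a b t :=
  mul_pos (Real.rpow_pos_of_pos ht.1 _) (Real.rpow_pos_of_pos (sub_pos.2 ht.2) _)

lemma betaKernel_add_left (a b s : ℝ) (ht : 0 < t) :
    betaKernel (a + s) b t = betaKernel a b t * t ^ s := by
  rw [betaKernel, betaKernel, add_sub_right_comm, Real.rpow_add ht]
  ring

lemma betaKernel_add_right (a b s : ℝ) (ht : t < 1) :
    betaKernel a (b + s) t = betaKernel a b t * (1 - t) ^ s := by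
  rw [betaKernel, betaKernel, add_sub_right_comm, Real.rpow_add (sub_pos.2 ht)]
  ring

lemma betaKernel_add_right_le_add_left (a b : ℝ) {s : ℝ} (hs : 0 ≤ s) (ht : t ∈ Ico (1 / 2) 1) :
    betaKernel a (b + s) t ≤ betaKernel (a + s) b t := by
  have ht0 : 0 < t := one_half_pos.trans_le ht.1
  rw [betaKernel_add_right a b s ht.2, betaKernel_add_left a b s ht0]
  have hpow : (1 - t) ^ s ≤ t ^ s :=
    Real.rpow_le_rpow (sub_nonneg.2 ht.2.le) (by linarith [ht.1]) hs
  exact mul_le_mul_of_nonneg_left hpow (betaKernel_pos a b ⟨ht0, ht.2⟩).le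

lemma betaKernel_add_swap_lt (a : ℝ) {p q : ℝ} (hp : 0 < p) (hq : 0 < q)
    (ht : t ∈ Ioo (1 / 2) 1) :
    betaKernel (a + p) (a + q) t + betaKernel (a + q) (a + p) t <
      betaKernel (a + p + q) a t + betaKernel a (a + p + q) t := by
  have ht0 : 0 < t := one_half_pos.trans ht.1
  have hu : 0 ≤ 1 - t := sub_nonneg.2 ht.2.le
  have hut : 1 - t < t := by linarith [ht.1]
  have hrearrange : 0 < (t ^ p - (1 - t) ^ p) * (t ^ q - (1 - t) ^ q) :=
    mul_pos (sub_pos.2 (Real.rpow_lt_rpow hu hut hp)) (sub_pos.2 (Real.rpow_lt_rpow hu hut hq))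
  simp only [betaKernel_add_left _ _ _ ht0, betaKernel_add_right _ _ _ ht.2]
  linarith [mul_pos (betaKernel_pos a a ⟨ht0, ht.2⟩) hrearrange]

lemma hasDerivAt_rpow_mul_one_sub_rpow (a b : ℝ) (ht : t ∈ Ioo 0 1) :
    HasDerivAt (fun t : ℝ ↦ t ^ a * (1 - t) ^ b)
      (a * betaKernel a b t - (a + b) * betaKernel (a + 1) b t) t := by
  have hu : 0 < 1 - t := sub_pos.2 ht.2
  have hderiv := (Real.hasDerivAt_rpow_const (p := a) (.inl ht.1.ne')).mul
    (((hasDerivAt_id t).const_sub 1).rpow_const (p := b) (.inl hu.ne'))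
  refine hderiv.congr_deriv ?_
  have ht_pow : t ^ a = t ^ (a - 1) * t := by rw [← Real.rpow_add_one ht.1.ne', sub_add_cancel]
  have hu_pow : (1 - t) ^ b = (1 - t) ^ (b - 1) * (1 - t) := by
    rw [← Real.rpow_add_one hu.ne', sub_add_cancel]
  rw [betaKernel_add_left a b 1 ht.1, Real.rpow_one]
  simp only [betaKernel, id_eq, ht_pow, hu_pow]
  ring

end Kernel

section Integrals

variable {a b x y : ℝ}

lemma intervalIntegrable_betaKernel_zero_one (ha : 0 < a) (hb : 0 < b) :
    IntervalIntegrable (betaKernel a b) volume 0 1 := by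
  have hleft {p : ℝ} (q : ℝ) (hp : 0 < p) :
      IntervalIntegrable (betaKernel p q) volume 0 (1 / 2) := by
    refine (intervalIntegral.intervalIntegrable_rpow' (by linarith)).mul_continuousOn ?_
    refine (continuousOn_const.sub continuousOn_id).rpow_const fun t ht ↦ .inl ?_
    rw [uIcc_of_le (by norm_num)] at ht
    exact (sub_pos.2 (ht.2.trans_lt one_half_lt_one)).ne'
  have hright : IntervalIntegrable (betaKernel a b) volume (1 / 2) 1 := by
    have hreflect := ((hleft a hb).comp_sub_left 1).symm
    simp only [betaKernel_one_sub, sub_zero, sub_half] at hreflect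
    exact hreflect
  exact (hleft b ha).trans hright

lemma intervalIntegrable_betaKernel (ha : 0 < a) (hb : 0 < b) (hx : x ∈ Icc 0 1)
    (hy : y ∈ Icc 0 1) : IntervalIntegrable (betaKernel a b) volume x y :=
  (intervalIntegrable_betaKernel_zero_one ha hb).mono_set <| by
    rw [uIcc_of_le zero_le_one]
    exact uIcc_subset_Icc hx hy

lemma upperBeta_pos (ha : 0 < a) (hb : 0 < b) (hx : x ∈ Ico 0 1) : 0 < upperBeta x a b :=
  intervalIntegral.intervalIntegral_pos_of_pos_on
    (intervalIntegrable_betaKernel ha hb (Ico_subset_Icc_self hx) (right_mem_Icc.2 zero_le_one))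
    (fun _ ht ↦ betaKernel_pos a b ⟨hx.1.trans_lt ht.1, ht.2⟩) hx.2

lemma betaFn_eq_upperBeta_zero (a b : ℝ) : betaFn a b = upperBeta 0 a b := rfl

lemma betaFn_pos (ha : 0 < a) (hb : 0 < b) : 0 < betaFn a b :=
  upperBeta_pos ha hb (left_mem_Ico.2 zero_lt_one)

lemma integral_betaKernel_zero (a b x : ℝ) :
    ∫ t in 0..x, betaKernel a b t = upperBeta (1 - x) b a := by
  simpa only [upperBeta, betaKernel_one_sub, sub_zero] using
    intervalIntegral.integral_comp_sub_left (betaKernel b a) (a := 0) (b := x) 1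

lemma betaFn_comm (a b : ℝ) : betaFn a b = betaFn b a := by
  rw [betaFn_eq_upperBeta_zero b a, ← sub_self 1, ← integral_betaKernel_zero]
  rfl

lemma betaFn_eq_upperBeta_add_upperBeta (ha : 0 < a) (hb : 0 < b) (hx : x ∈ Icc 0 1) :
    betaFn a b = upperBeta x a b + upperBeta (1 - x) b a := by
  rw [← integral_betaKernel_zero, add_comm, upperBeta,
    intervalIntegral.integral_add_adjacent_intervals
      (intervalIntegrable_betaKernel ha hb (left_mem_Icc.2 zero_le_one) hx)
      (intervalIntegrable_betaKernel ha hb hx (right_mem_Icc.2 zero_le_one))]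
  rfl

lemma betaFn_eq_upperBeta_half_add_swap (ha : 0 < a) (hb : 0 < b) :
    betaFn a b = upperBeta (1 / 2) a b + upperBeta (1 / 2) b a := by
  simpa only [sub_half] using betaFn_eq_upperBeta_add_upperBeta ha hb (x := 1 / 2) (by norm_num)

lemma upperBeta_add_right_le_add_left {s : ℝ} (ha : 0 < a) (hb : 0 < b) (hs : 0 ≤ s)
    (hx : x ∈ Icc (1 / 2) 1) : upperBeta x a (b + s) ≤ upperBeta x (a + s) b := by
  have hx' : x ∈ Icc 0 1 := ⟨one_half_pos.le.trans hx.1, hx.2⟩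
  have h1 : (1 : ℝ) ∈ Icc 0 1 := right_mem_Icc.2 zero_le_one
  exact intervalIntegral.integral_mono_on_of_le_Ioo hx.2
    (intervalIntegrable_betaKernel ha (by positivity) hx' h1)
    (intervalIntegrable_betaKernel (by positivity) hb hx' h1)
    fun t ht ↦ betaKernel_add_right_le_add_left a b hs ⟨hx.1.trans ht.1.le, ht.2⟩

lemma mul_upperBeta_add_rpow_mul_rpow (ha : 0 < a) (hb : 0 < b) (hx : x ∈ Icc 0 1) :
    a * upperBeta x a b + x ^ a * (1 - x) ^ b = (a + b) * upperBeta x (a + 1) b := by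
  have h1 : (1 : ℝ) ∈ Icc 0 1 := right_mem_Icc.2 zero_le_one
  have hker := (intervalIntegrable_betaKernel ha hb hx h1).const_mul a
  have hker_succ :=
    (intervalIntegrable_betaKernel (add_pos ha one_pos) hb hx h1).const_mul (a + b)
  have hcont : Continuous fun t : ℝ ↦ t ^ a * (1 - t) ^ b :=
    (Real.continuous_rpow_const ha.le).mul
      ((Real.continuous_rpow_const hb.le).comp (continuous_const.sub continuous_id))
  have hftc := intervalIntegral.integral_eq_sub_of_hasDerivAt_of_le hx.2 hcont.continuousOn
    (fun t ht ↦ hasDerivAt_rpow_mul_one_sub_rpow a b ⟨hx.1.trans_lt ht.1, ht.2⟩)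
    (hker.sub hker_succ)
  rw [intervalIntegral.integral_sub hker hker_succ, intervalIntegral.integral_const_mul,
    intervalIntegral.integral_const_mul, sub_self, Real.zero_rpow hb.ne', mul_zero] at hftc
  rw [upperBeta, upperBeta]
  linarith

lemma mul_betaFn (ha : 0 < a) (hb : 0 < b) : a * betaFn a b = (a + b) * betaFn (a + 1) b := by
  simpa only [Real.zero_rpow ha.ne', zero_mul, add_zero, betaFn_eq_upperBeta_zero] using
    mul_upperBeta_add_rpow_mul_rpow ha hb (left_mem_Icc.2 zero_le_one)

lemma betaFn_eq_integral_betaKernel_add_swap (ha : 0 < a) (hb : 0 < b) :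
    betaFn a b = ∫ t in (1 / 2)..1, (betaKernel a b t + betaKernel b a t) := by
  rw [betaFn_eq_upperBeta_half_add_swap ha hb, upperBeta, upperBeta,
    intervalIntegral.integral_add (intervalIntegrable_betaKernel ha hb (by norm_num) (by norm_num))
      (intervalIntegrable_betaKernel hb ha (by norm_num) (by norm_num))]

lemma betaFn_add_add_lt {p q : ℝ} (ha : 0 < a) (hp : 0 < p) (hq : 0 < q) :
    betaFn (a + p) (a + q) < betaFn (a + p + q) a := by
  have hap : 0 < a + p := add_pos ha hp
  have haq : 0 < a + q := add_pos ha hq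
  have hapq : 0 < a + p + q := add_pos hap hq
  have hfold {c d : ℝ} (hc : 0 < c) (hd : 0 < d) :
      IntervalIntegrable (fun t ↦ betaKernel c d t + betaKernel d c t) volume (1 / 2) 1 :=
    (intervalIntegrable_betaKernel hc hd (by norm_num) (by norm_num)).add
      (intervalIntegrable_betaKernel hd hc (by norm_num) (by norm_num))
  rw [betaFn_eq_integral_betaKernel_add_swap hap haq,
    betaFn_eq_integral_betaKernel_add_swap hapq ha, ← sub_pos,
    ← intervalIntegral.integral_sub (hfold hapq ha) (hfold hap haq)]
  exact intervalIntegral.intervalIntegral_pos_of_pos_on ((hfold hapq ha).sub (hfold hap haq))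
    (fun t ht ↦ sub_pos.2 (betaKernel_add_swap_lt a hp hq ht)) one_half_lt_one

end Integrals

section Probability

variable {a b : ℝ}

lemma I_eq_upperBeta_div_betaFn (a b : ℝ) : I a b = upperBeta (1 / 2) a b / betaFn a b :=
  one_div_mul_eq_div _ _

lemma I_add_I_swap (ha : 0 < a) (hb : 0 < b) : I a b + I b a = 1 := by
  rw [I_eq_upperBeta_div_betaFn, I_eq_upperBeta_div_betaFn, betaFn_comm b a, ← add_div,
    ← betaFn_eq_upperBeta_half_add_swap ha hb, div_self (betaFn_pos ha hb).ne']

lemma I_add_right_le_I_add_left {s : ℝ} (ha : 0 < a) (hb : 0 < b) (hs : 0 ≤ s) :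
    I a (b + s) ≤ I (a + s) b := by
  have has : 0 < a + s := by positivity
  have hbs : 0 < b + s := by positivity
  have hhalf : (1 / 2 : ℝ) ∈ Icc (1 / 2) 1 := by norm_num
  have hupper := upperBeta_add_right_le_add_left ha hb hs hhalf
  have hlower := upperBeta_add_right_le_add_left hb ha hs hhalf
  have hpos {c d : ℝ} (hc : 0 < c) (hd : 0 < d) : 0 < upperBeta (1 / 2) c d :=
    upperBeta_pos hc hd (by norm_num)
  rw [I_eq_upperBeta_div_betaFn, I_eq_upperBeta_div_betaFn,
    div_le_div_iff₀ (betaFn_pos ha hbs) (betaFn_pos has hb),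
    betaFn_eq_upperBeta_half_add_swap ha hbs, betaFn_eq_upperBeta_half_add_swap has hb]
  linarith [mul_le_mul hupper hlower (hpos hb has).le (hpos has hb).le]

lemma I_swap_le (hb : 0 < b) (hba : b ≤ a) : I b a ≤ I a b := by
  simpa only [add_sub_cancel] using I_add_right_le_I_add_left hb hb (sub_nonneg.2 hba)

lemma one_half_le_I (hb : 0 < b) (hba : b ≤ a) : 1 / 2 ≤ I a b := by
  linarith [I_add_I_swap (hb.trans_le hba) hb, I_swap_le hb hba]

lemma I_add_one_left_sub_I (ha : 0 < a) (hb : 0 < b) :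
    I (a + 1) b - I a b = (1 / 2) ^ (a + b) / ((a + b) * betaFn (a + 1) b) := by
  have hupper := mul_upperBeta_add_rpow_mul_rpow ha hb (x := 1 / 2) (by norm_num)
  rw [sub_half, ← Real.rpow_add one_half_pos] at hupper
  have hI : I a b = a * upperBeta (1 / 2) a b / ((a + b) * betaFn (a + 1) b) := by
    rw [I_eq_upperBeta_div_betaFn, ← mul_betaFn ha hb, mul_div_mul_left _ _ ha.ne']
  have hI_succ : I (a + 1) b =
      (a + b) * upperBeta (1 / 2) (a + 1) b / ((a + b) * betaFn (a + 1) b) := by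
    rw [I_eq_upperBeta_div_betaFn, mul_div_mul_left _ _ (add_pos ha hb).ne']
  rw [hI, hI_succ, ← sub_div, ← hupper, add_sub_cancel_left]

end Probability

section Reward

variable {a b : ℝ}

lemma hFn_I (hb : 0 < b) (hba : b ≤ a) : hFn (I a b) = I a b :=
  max_eq_left (by linarith [one_half_le_I hb hba])

lemma hFn_I_add_one_right_le (hb : 0 < b) (hba : b ≤ a) : hFn (I a (b + 1)) ≤ I (a + 1) b := by
  have ha : 0 < a := hb.trans_le hba
  refine max_le (I_add_right_le_I_add_left ha hb zero_le_one) ?_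
  calc 1 - I a (b + 1) = I (b + 1) a := by linarith [I_add_I_swap ha (add_pos hb one_pos)]
    _ ≤ I (a + 1) b := by
      have hshift := I_add_right_le_I_add_left (s := a - b) (add_pos hb one_pos) hb
        (sub_nonneg.2 hba)
      rwa [add_sub_cancel, add_right_comm, add_sub_cancel] at hshift

lemma Rplus_eq_rpow_div_betaFn (hb : 0 < b) (hba : b ≤ a) :
    Rplus a b = (1 / 2) ^ (a + b) / ((a + b) * betaFn (a + 1) b) := by
  rw [← I_add_one_left_sub_I (hb.trans_le hba) hb, Rplus, hFn_I hb hba,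
    hFn_I hb (hba.trans (lt_add_one a).le), max_eq_left]
  exact sub_le_sub_right (hFn_I_add_one_right_le hb hba) _

end Reward

theorem Rplus_antidiag_strict_anti_general (a : ℝ) :
    StrictAntiOn (fun s ↦ Rplus (a + s) (a - s)) (Ico 0 a) := by
  intro s hs t ht hst
  have ha : 0 < a := hs.1.trans_lt hs.2
  have hbeta : betaFn (a + s + 1) (a - s) < betaFn (a + t + 1) (a - t) := by
    convert betaFn_add_add_lt (a := a - t) (p := s + t + 1) (q := t - s) (sub_pos.2 ht.2)
      (by linarith [hs.1, ht.1]) (sub_pos.2 hst) using 2 <;> ring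
  have hsum (r : ℝ) : a + r + (a - r) = 2 * a := by ring
  beta_reduce
  rw [Rplus_eq_rpow_div_betaFn (sub_pos.2 hs.2) (by linarith [hs.1]),
    Rplus_eq_rpow_div_betaFn (sub_pos.2 ht.2) (by linarith [ht.1]), hsum, hsum]
  have hbeta_pos : 0 < betaFn (a + s + 1) (a - s) :=
    betaFn_pos (by linarith [hs.1]) (sub_pos.2 hs.2)
  gcongr

theorem Rplus_antidiag_strict_anti (a k : ℕ) (ha : 0 < a) (hk : k + 2 ≤ a) :
    Rplus ((a : ℝ) + k + 1) ((a : ℝ) - k - 1) < Rplus ((a : ℝ) + k) ((a : ℝ) - k) := by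
  have hka : (k : ℝ) + 1 < a := mod_cast hk
  simpa only [add_assoc, sub_sub] using Rplus_antidiag_strict_anti_general a
    ⟨k.cast_nonneg, (lt_add_one _).trans hka⟩ ⟨by positivity, hka⟩ (lt_add_one (k : ℝ))
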